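/- Let E = EuclideanSpace ℝ (Fin N), let d ∈ ℕ, and let f : E → ℝ be C^∞ with iteratedFDeriv ℝ κ f x = 0 for all κ > d and all x ∈ E. Define the Taylor-series flux g : E × E → E by ⟪g(x,Δ), e⟫ = Σ_{κ=1}^{d} (1/κ!) (iteratedFDeriv ℝ κ f x) applied to (κ−1) copies of Δ followed by e. Let Δt > 0 and let M, C : E →ₗ[ℝ] E be self-adjoint. Suppose u : ℕ → E satisfies, for all n ≥ 1, M((u(n+1) − 2u(n) + u(n−1))/Δt²) + C((u(n+1) − u(n−1))/(2Δt)) + g(m(n), m(n+1) − m(n)) = 0, where m(n) := (u(n)+u(n−1))/2. Then with v(n) := (u(n) − u(n−1))/Δt, Π(n) := (1/2)⟪v(n), M v(n)⟫ + f(m(n)), and w(n) := (u(n+1) − u(n−1))/(2Δt), one has Π(n+1) − Π(n) = −Δt ⟪w(n), C w(n)⟫ for all n ≥ 1. -/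

import Mathlib

open RealInnerProductSpace

/-!
The scheme is paired with the increment `Δ = m(n+1) − m(n)` of the midpoints. Since `Δ` is both
`Δt • w(n)` and `(Δt / 2) • (v(n+1) + v(n))`, the damping term contributes `Δt ⟪w(n), C w(n)⟫`,
while the inertia term is `(1 / 2) ⟪M (v(n+1) − v(n)), v(n+1) + v(n)⟫`, a difference of two squares
for the symmetric form of `M`, that is, the increment of the kinetic energy. Finally,
`⟪g x Δ, Δ⟫` is the Taylor expansion of `f (x + Δ) − f x` to order `d`, whose remainder vanishes.
-/

section Taylor

variable {E F : Type*} [NormedAddCommGroup E] [NormedSpace ℝ E]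
  [NormedAddCommGroup F] [NormedSpace ℝ F] [CompleteSpace F]

theorem map_add_sub_map_eq_sum_iteratedFDeriv {d : ℕ} {f : E → F}
    (hf : ContDiff ℝ (d + 1) f) (hd : ∀ x, iteratedFDeriv ℝ (d + 1) f x = 0) (x y : E) :
    f (x + y) - f x =
      ∑ k ∈ Finset.Icc 1 d, (k.factorial : ℝ)⁻¹ • iteratedFDeriv ℝ k f x (fun _ ↦ y) := by
  rw [map_add_eq_sum_add_integral_iteratedFDeriv (n := d) fun _ _ ↦ hf.contDiffAt,
    Finset.range_eq_Ico, Finset.sum_eq_sum_Ico_succ_bot d.succ_pos]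
  simp [hd, Finset.Ico_add_one_right_eq_Icc]

end Taylor

section EnergyBalance

variable {E : Type*} [NormedAddCommGroup E] [InnerProductSpace ℝ E]

/-- `g` is a discrete gradient of the potential `f`: paired with an increment of the base point, it
gives the exact increment of `f`. The second argument of `g` is the increment, not the end point. -/
def IsDiscreteGradient (f : E → ℝ) (g : E → E → E) : Prop :=
  ∀ x Δ : E, ⟪g x Δ, Δ⟫ = f (x + Δ) - f x

/-- `g` is the Taylor-series flux of order `d` of the potential `f`, determined by its inner
products with all vectors `e`. In the term of order `κ`, the direction `e` fills the last of the `κ`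
slots and the increment `Δ` the other `κ - 1`. -/
def IsTaylorFlux (d : ℕ) (f : E → ℝ) (g : E → E → E) : Prop :=
  ∀ x Δ e : E, ⟪g x Δ, e⟫ =
    ∑ κ ∈ Finset.Icc 1 d, (κ.factorial : ℝ)⁻¹ *
      (iteratedFDeriv ℝ κ f x) (fun i : Fin κ ↦ if (i : ℕ) + 1 = κ then e else Δ)

/-- Three consecutive states `u₀`, `u₁`, `u₂` solve the scheme with time step `Δt`, mass operator
`M`, possibly nonlinear damping `C` and flux `g`. -/
def IsSchemeStep (Δt : ℝ) (M : E →ₗ[ℝ] E) (C : E → E) (g : E → E → E) (u₀ u₁ u₂ : E) : Prop :=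
  M ((Δt ^ 2)⁻¹ • (u₂ - (2 : ℝ) • u₁ + u₀)) + C ((2 * Δt)⁻¹ • (u₂ - u₀)) +
    g ((2 : ℝ)⁻¹ • (u₁ + u₀)) ((2 : ℝ)⁻¹ • (u₂ + u₁) - (2 : ℝ)⁻¹ • (u₁ + u₀)) = 0

/-- The discrete energy `Π` of two consecutive states `u₀`, `u₁`: the kinetic energy of the
difference quotient plus the potential at the midpoint. -/
noncomputable def discreteEnergy (Δt : ℝ) (M : E →ₗ[ℝ] E) (f : E → ℝ) (u₀ u₁ : E) : ℝ :=
  (1 / 2 : ℝ) * ⟪Δt⁻¹ • (u₁ - u₀), M (Δt⁻¹ • (u₁ - u₀))⟫ + f ((2 : ℝ)⁻¹ • (u₁ + u₀))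

theorem IsTaylorFlux.isDiscreteGradient {d : ℕ} {f : E → ℝ} {g : E → E → E}
    (hg : IsTaylorFlux d f g) (hf : ContDiff ℝ (d + 1) f)
    (hd : ∀ x, iteratedFDeriv ℝ (d + 1) f x = 0) : IsDiscreteGradient f g := fun x Δ ↦ by
  simp only [hg x Δ Δ, ite_self, smul_eq_mul,
    map_add_sub_map_eq_sum_iteratedFDeriv hf hd]

theorem inner_map_sub_add_of_isSymmetric {M : E →ₗ[ℝ] E} (hM : M.IsSymmetric) (p q : E) :
    ⟪M (p - q), p + q⟫ = ⟪p, M p⟫ - ⟪q, M q⟫ := by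
  have cross : ⟪M p, q⟫ = ⟪M q, p⟫ := by rw [hM, real_inner_comm]
  rw [map_sub, inner_sub_left, inner_add_right, inner_add_right, cross, hM p p, hM q q]
  ring

theorem inner_map_secondDifference_midpoint_sub {Δt : ℝ} (hΔt : Δt ≠ 0) {M : E →ₗ[ℝ] E}
    (hM : M.IsSymmetric) (u₀ u₁ u₂ : E) :
    ⟪M ((Δt ^ 2)⁻¹ • (u₂ - (2 : ℝ) • u₁ + u₀)),
        (2 : ℝ)⁻¹ • (u₂ + u₁) - (2 : ℝ)⁻¹ • (u₁ + u₀)⟫ =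
      (1 / 2 : ℝ) * ⟪Δt⁻¹ • (u₂ - u₁), M (Δt⁻¹ • (u₂ - u₁))⟫ -
        (1 / 2 : ℝ) * ⟪Δt⁻¹ • (u₁ - u₀), M (Δt⁻¹ • (u₁ - u₀))⟫ := by
  set v₁ := Δt⁻¹ • (u₁ - u₀) with hv₁
  set v₂ := Δt⁻¹ • (u₂ - u₁) with hv₂
  have acceleration : (Δt ^ 2)⁻¹ • (u₂ - (2 : ℝ) • u₁ + u₀) = Δt⁻¹ • (v₂ - v₁) := by
    rw [hv₁, hv₂]
    module
  have increment :
      (2 : ℝ)⁻¹ • (u₂ + u₁) - (2 : ℝ)⁻¹ • (u₁ + u₀) = (Δt / 2) • (v₂ + v₁) := by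
    rw [hv₁, hv₂]
    match_scalars <;> field_simp
    ring
  rw [acceleration, increment, map_smul, real_inner_smul_left, real_inner_smul_right,
    inner_map_sub_add_of_isSymmetric hM]
  field_simp

theorem midpoint_sub_midpoint_eq_smul_centralDifference {Δt : ℝ} (hΔt : Δt ≠ 0) (u₀ u₁ u₂ : E) :
    (2 : ℝ)⁻¹ • (u₂ + u₁) - (2 : ℝ)⁻¹ • (u₁ + u₀) = Δt • (2 * Δt)⁻¹ • (u₂ - u₀) := by
  match_scalars <;> field_simp
  ring

theorem IsDiscreteGradient.discreteEnergy_sub_discreteEnergy {f : E → ℝ} {g : E → E → E}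
    (hg : IsDiscreteGradient f g) {Δt : ℝ} (hΔt : Δt ≠ 0) {M : E →ₗ[ℝ] E} (hM : M.IsSymmetric)
    {C : E → E} {u₀ u₁ u₂ : E} (hu : IsSchemeStep Δt M C g u₀ u₁ u₂) :
    discreteEnergy Δt M f u₁ u₂ - discreteEnergy Δt M f u₀ u₁ =
      -Δt * ⟪(2 * Δt)⁻¹ • (u₂ - u₀), C ((2 * Δt)⁻¹ • (u₂ - u₀))⟫ := by
  have inertia := inner_map_secondDifference_midpoint_sub hΔt hM u₀ u₁ u₂
  unfold IsSchemeStep at hu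
  unfold discreteEnergy
  set m₁ := (2 : ℝ)⁻¹ • (u₁ + u₀)
  set m₂ := (2 : ℝ)⁻¹ • (u₂ + u₁)
  set w := (2 * Δt)⁻¹ • (u₂ - u₀)
  have damping : ⟪C w, m₂ - m₁⟫ = Δt * ⟪w, C w⟫ := by
    rw [midpoint_sub_midpoint_eq_smul_centralDifference hΔt, real_inner_smul_right,
      real_inner_comm]
  have potential : ⟪g m₁ (m₂ - m₁), m₂ - m₁⟫ = f m₂ - f m₁ := by
    rw [hg, add_sub_cancel]
  have balance := congrArg (⟪·, m₂ - m₁⟫) hu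
  simp only [inner_add_left, inner_zero_left] at balance
  linarith

theorem taylor_scheme_energy_balance_general {d : ℕ} {f : E → ℝ} (hf : ContDiff ℝ (d + 1) f)
    (hd : ∀ x, iteratedFDeriv ℝ (d + 1) f x = 0) {g : E → E → E} (hg : IsTaylorFlux d f g)
    {Δt : ℝ} (hΔt : Δt ≠ 0) {M : E →ₗ[ℝ] E} (hM : M.IsSymmetric) {C : E → E} {u₀ u₁ u₂ : E}
    (hu : IsSchemeStep Δt M C g u₀ u₁ u₂) :
    discreteEnergy Δt M f u₁ u₂ - discreteEnergy Δt M f u₀ u₁ =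
      -Δt * ⟪(2 * Δt)⁻¹ • (u₂ - u₀), C ((2 * Δt)⁻¹ • (u₂ - u₀))⟫ :=
  (hg.isDiscreteGradient hf hd).discreteEnergy_sub_discreteEnergy hΔt hM hu

end EnergyBalance

/-- Unconditional stability (discrete energy balance) of the Taylor-series scheme:
with `m(n) = (u(n)+u(n−1))/2`, `v(n) = (u(n)−u(n−1))/Δt`,
`Π(n) = (1/2)⟪v(n), M v(n)⟫ + f(m(n))`, and `w(n) = (u(n+1)−u(n−1))/(2Δt)`,
the scheme satisfies `Π(n+1) − Π(n) = −Δt ⟪w(n), C w(n)⟫`. -/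
theorem taylor_scheme_energy_balance (N d : ℕ)
    (f : EuclideanSpace ℝ (Fin N) → ℝ) (hf : ContDiff ℝ (⊤ : ℕ∞) f)
    (hpoly : ∀ κ : ℕ, d < κ → ∀ x : EuclideanSpace ℝ (Fin N), iteratedFDeriv ℝ κ f x = 0)
    (g : EuclideanSpace ℝ (Fin N) → EuclideanSpace ℝ (Fin N) → EuclideanSpace ℝ (Fin N))
    (hg : ∀ x Δ e : EuclideanSpace ℝ (Fin N), ⟪g x Δ, e⟫ =
      ∑ κ ∈ Finset.Icc 1 d, (κ.factorial : ℝ)⁻¹ *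
        (iteratedFDeriv ℝ κ f x) (fun i : Fin κ => if (i : ℕ) + 1 = κ then e else Δ))
    (Δt : ℝ) (hΔt : 0 < Δt)
    (M C : EuclideanSpace ℝ (Fin N) →ₗ[ℝ] EuclideanSpace ℝ (Fin N))
    (hM_sa : ∀ x y : EuclideanSpace ℝ (Fin N), ⟪M x, y⟫ = ⟪x, M y⟫)
    (hC_sa : ∀ x y : EuclideanSpace ℝ (Fin N), ⟪C x, y⟫ = ⟪x, C y⟫)
    (u : ℕ → EuclideanSpace ℝ (Fin N))
    (hu : ∀ n, 1 ≤ n →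
      M ((Δt ^ 2)⁻¹ • (u (n + 1) - (2 : ℝ) • u n + u (n - 1))) +
        C ((2 * Δt)⁻¹ • (u (n + 1) - u (n - 1))) +
        g ((2 : ℝ)⁻¹ • (u n + u (n - 1)))
          ((2 : ℝ)⁻¹ • (u (n + 1) + u n) - (2 : ℝ)⁻¹ • (u n + u (n - 1))) = 0) :
    ∀ n, 1 ≤ n →
      ((1/2 : ℝ) * ⟪Δt⁻¹ • (u (n + 1) - u n), M (Δt⁻¹ • (u (n + 1) - u n))⟫ +
          f ((2 : ℝ)⁻¹ • (u (n + 1) + u n))) -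
        ((1/2 : ℝ) * ⟪Δt⁻¹ • (u n - u (n - 1)), M (Δt⁻¹ • (u n - u (n - 1)))⟫ +
          f ((2 : ℝ)⁻¹ • (u n + u (n - 1)))) =
      -Δt * ⟪(2 * Δt)⁻¹ • (u (n + 1) - u (n - 1)),
              C ((2 * Δt)⁻¹ • (u (n + 1) - u (n - 1)))⟫ :=
  fun n hn ↦ taylor_scheme_energy_balance_general (hf.of_le (mod_cast le_top))
    (hpoly (d + 1) d.lt_succ_self) hg hΔt.ne' hM_sa (hu n hn)
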